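/- For the SCAD penalty with a > 2, λ > 0, the SCAD thresholding rule θ̂(z) = sgn(z)(|z|-λ)₊ for |z| ≤ 2λ; θ̂(z) = ((a-1)z - sgn(z)aλ)/(a-2) for 2λ < |z| ≤ aλ; θ̂(z) = z for |z| > aλ, is a continuous function of z, equals 0 iff |z| ≤ λ, and satisfies θ̂(z) = z for |z| > aλ. -/

import Mathlib

/-!
Let `S_t(z) = sgn(z)(|z| - t)₊` be soft thresholding at level `t`. The slopes of the SCAD rule on
`z ≥ 0` are `0, 1, (a - 1)/(a - 2), 1`, with breaks at `λ`, `2λ` and `aλ`; reading off the jumps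
`1, 1/(a - 2), -1/(a - 2)` gives `θ̂ = S_λ + (S_{2λ} - S_{aλ})/(a - 2)`. Continuity follows, because
`S_t(z) = (z - t)₊ - (-z - t)₊`.
-/

/-- The SCAD thresholding rule with parameters `a > 2` and `λ > 0`. -/
noncomputable def scadThreshold (a lam z : ℝ) : ℝ :=
  if |z| ≤ 2 * lam then Real.sign z * max (|z| - lam) 0
  else if |z| ≤ a * lam then ((a - 1) * z - Real.sign z * a * lam) / (a - 2)
  else z

theorem real_sign_mul_abs (z : ℝ) : Real.sign z * |z| = z := by
  rcases lt_trichotomy z 0 with hz | rfl | hz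
  · simp [Real.sign_of_neg hz, abs_of_neg hz]
  · simp
  · simp [Real.sign_of_pos hz, abs_of_pos hz]

/-- The soft thresholding rule `S_t(z) = sgn(z)(|z| - t)₊`, out of which the SCAD rule is built. As
in `scadThreshold`, `Real.sign 0 = 0`. -/
noncomputable def softThreshold (t z : ℝ) : ℝ :=
  Real.sign z * max (|z| - t) 0

section SoftThreshold

variable {t z : ℝ}

theorem softThreshold_of_le_abs (h : t ≤ |z|) : softThreshold t z = z - Real.sign z * t := by
  rw [softThreshold, max_eq_left (sub_nonneg.2 h), mul_sub, real_sign_mul_abs]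

theorem softThreshold_of_abs_le (h : |z| ≤ t) : softThreshold t z = 0 := by
  rw [softThreshold, max_eq_right (sub_nonpos.2 h), mul_zero]

theorem softThreshold_eq_zero_iff (ht : 0 ≤ t) : softThreshold t z = 0 ↔ |z| ≤ t := by
  refine ⟨fun h ↦ ?_, softThreshold_of_abs_le⟩
  rcases mul_eq_zero.1 h with hsign | hmax
  · rwa [Real.sign_eq_zero_iff.1 hsign, abs_zero]
  · exact sub_nonpos.1 (max_eq_right_iff.1 hmax)

theorem softThreshold_eq_max_sub_max (ht : 0 ≤ t) :
    softThreshold t z = max (z - t) 0 - max (-z - t) 0 := by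
  rcases lt_trichotomy z 0 with hz | rfl | hz
  · rw [softThreshold, Real.sign_of_neg hz, abs_of_neg hz, max_eq_right (a := z - t) (by linarith)]
    ring
  · simp [softThreshold]
  · rw [softThreshold, Real.sign_of_pos hz, abs_of_pos hz, max_eq_right (a := -z - t) (by linarith)]
    ring

theorem continuous_softThreshold (ht : 0 ≤ t) : Continuous (softThreshold t) := by
  have heq : softThreshold t = fun z ↦ max (z - t) 0 - max (-z - t) 0 :=
    funext fun _ ↦ softThreshold_eq_max_sub_max ht
  rw [heq]
  fun_prop

end SoftThreshold

section ScadThreshold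

variable {a lam z : ℝ}

theorem scadThreshold_of_mul_lt_abs (ha : 2 ≤ a) (hlam : 0 ≤ lam) (hz : a * lam < |z|) :
    scadThreshold a lam z = z := by
  have hknots : 2 * lam ≤ a * lam := by gcongr
  rw [scadThreshold, if_neg (hknots.trans_lt hz).not_ge, if_neg hz.not_ge]

theorem scadThreshold_eq_softThreshold_add (ha : 2 < a) (hlam : 0 ≤ lam) :
    scadThreshold a lam z = softThreshold lam z +
      (softThreshold (2 * lam) z - softThreshold (a * lam) z) / (a - 2) := by
  have hne : a - 2 ≠ 0 := (sub_pos.2 ha).ne'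
  have hknots : 2 * lam ≤ a * lam := by gcongr
  rcases le_or_gt |z| (2 * lam) with h₂ | h₂
  · rw [scadThreshold, if_pos h₂, softThreshold_of_abs_le h₂,
      softThreshold_of_abs_le (h₂.trans hknots), sub_zero, zero_div, add_zero, softThreshold]
  have h₁ : lam ≤ |z| := by linarith
  rw [softThreshold_of_le_abs h₁, softThreshold_of_le_abs h₂.le]
  rcases le_or_gt |z| (a * lam) with h₃ | h₃
  · rw [scadThreshold, if_neg h₂.not_ge, if_pos h₃, softThreshold_of_abs_le h₃]
    field_simp
    ring
  · rw [scadThreshold_of_mul_lt_abs ha.le hlam h₃, softThreshold_of_le_abs h₃.le]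
    field_simp
    ring

theorem continuous_scadThreshold (ha : 2 < a) (hlam : 0 ≤ lam) :
    Continuous (scadThreshold a lam) := by
  have heq : scadThreshold a lam = fun z ↦ softThreshold lam z +
      (softThreshold (2 * lam) z - softThreshold (a * lam) z) / (a - 2) :=
    funext fun _ ↦ scadThreshold_eq_softThreshold_add ha hlam
  have hknot₂ : 0 ≤ 2 * lam := by positivity
  have hknot₃ : 0 ≤ a * lam := mul_nonneg (by linarith) hlam
  rw [heq]
  exact (continuous_softThreshold hlam).add
    (((continuous_softThreshold hknot₂).sub (continuous_softThreshold hknot₃)).div_const _)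

theorem scadThreshold_eq_zero_iff (hlam : 0 ≤ lam) : scadThreshold a lam z = 0 ↔ |z| ≤ lam := by
  rcases le_or_gt |z| (2 * lam) with h₂ | h₂
  · rw [scadThreshold, if_pos h₂]
    exact softThreshold_eq_zero_iff hlam
  have hz : z ≠ 0 := abs_pos.1 (by linarith)
  refine iff_of_false ?_ (by linarith)
  rw [scadThreshold, if_neg h₂.not_ge]
  split_ifs with h₃
  · have ha : 2 < a := lt_of_mul_lt_mul_right (h₂.trans_le h₃) hlam
    have hnum : (a - 1) * z - Real.sign z * a * lam =
        Real.sign z * ((a - 1) * |z| - a * lam) := by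
      linear_combination (1 - a) * real_sign_mul_abs z
    have hpos : 0 < (a - 1) * |z| - a * lam := sub_pos.2 <| calc
      a * lam ≤ (2 * (a - 1)) * lam := by gcongr; linarith
      _ = (a - 1) * (2 * lam) := by ring
      _ < (a - 1) * |z| := by gcongr; linarith
    rw [hnum]
    exact div_ne_zero (mul_ne_zero (Real.sign_eq_zero_iff.not.2 hz) hpos.ne') (sub_pos.2 ha).ne'
  · exact hz

end ScadThreshold

/-- The SCAD thresholding rule is continuous in `z`, equals `0` iff `|z| ≤ λ`, and
satisfies `θ̂(z) = z` for `|z| > aλ`. -/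
theorem scad_threshold_properties (a lam : ℝ) (ha : 2 < a) (hlam : 0 < lam) :
    Continuous (scadThreshold a lam) ∧
      (∀ z : ℝ, scadThreshold a lam z = 0 ↔ |z| ≤ lam) ∧
      (∀ z : ℝ, a * lam < |z| → scadThreshold a lam z = z) :=
  ⟨continuous_scadThreshold ha hlam.le, fun _ ↦ scadThreshold_eq_zero_iff hlam.le,
    fun _ ↦ scadThreshold_of_mul_lt_abs ha.le hlam.le⟩
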